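/- arXiv:2602.14453 — 6 statements merged into one kernel-verified Lean document; each statement's English description precedes it below -/
import Mathlib

section
/- (Theorem 1, first part) For all r, σ > 0 and γ > 0, the Fisher information correlation coefficient ρ = J₁₂/√(J₁₁·J₂₂) of the MI-ISAC Fisher information matrix equals (3 + 2·α·r) / √(2·((3 + α·r)² + (α·r)²)), where α = α(σ). -/
open Real

/-- Field attenuation constant `α(σ) = √(π f₀ μ₀ σ)`. -/
noncomputable def miAlpha (f₀ μ₀ σ : ℝ) : ℝ := Real.sqrt (Real.pi * f₀ * μ₀ * σ)

/-- `β(r,σ) = 3/r + α(σ)`. -/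
noncomputable def miBeta (f₀ μ₀ r σ : ℝ) : ℝ := 3 / r + miAlpha f₀ μ₀ σ

/-- (Theorem 1, first part) The Fisher information correlation coefficient
`ρ = J₁₂/√(J₁₁·J₂₂)` of the MI-ISAC FIM equals `(3 + 2αr)/√(2((3+αr)² + (αr)²))`. -/
theorem stmt_6 (f₀ μ₀ : ℝ) (hf₀ : 0 < f₀) (hμ₀ : 0 < μ₀)
    (r σ γ : ℝ) (hr : 0 < r) (hσ : 0 < σ) (hγ : 0 < γ) :
    (γ * miAlpha f₀ μ₀ σ * r * (miBeta f₀ μ₀ r σ + miAlpha f₀ μ₀ σ) / (2 * σ)) /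
        Real.sqrt ((γ * (miBeta f₀ μ₀ r σ ^ 2 + miAlpha f₀ μ₀ σ ^ 2)) *
          (γ * miAlpha f₀ μ₀ σ ^ 2 * r ^ 2 / (2 * σ ^ 2))) =
      (3 + 2 * (miAlpha f₀ μ₀ σ * r)) /
        Real.sqrt (2 * ((3 + miAlpha f₀ μ₀ σ * r) ^ 2 + (miAlpha f₀ μ₀ σ * r) ^ 2)) := by
  have hα : 0 < miAlpha f₀ μ₀ σ := Real.sqrt_pos.2 (by positivity)
  unfold miBeta
  generalize miAlpha f₀ μ₀ σ = a at hα
  -- Both `J₁₂` and `√(J₁₁ J₂₂)` carry the common positive factor `k = γα/(2σ)`.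
  have hk : 0 < γ * a / (2 * σ) := by positivity
  have hnum : γ * a * r * (3 / r + a + a) / (2 * σ) =
      γ * a / (2 * σ) * (3 + 2 * (a * r)) := by
    field_simp
    ring
  have hden : (γ * ((3 / r + a) ^ 2 + a ^ 2)) * (γ * a ^ 2 * r ^ 2 / (2 * σ ^ 2)) =
      (γ * a / (2 * σ)) ^ 2 * (2 * ((3 + a * r) ^ 2 + (a * r) ^ 2)) := by
    field_simp
  rw [hnum, hden, Real.sqrt_mul (sq_nonneg _), Real.sqrt_sq hk.le,
    mul_div_mul_left _ _ hk.ne']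
end

section
/- (Theorem 1, second part) For all r, σ > 0 and γ > 0, the MI-ISAC Fisher information matrix J is positive definite, and the joint estimation penalties Δ_r = J₁₁·(J⁻¹)₁₁ and Δ_σ = J₂₂·(J⁻¹)₂₂ satisfy Δ_r = Δ_σ = 1/(1 − ρ²) ≥ 1, where ρ = J₁₂/√(J₁₁·J₂₂). -/
/-!
Since `β - α = 3 / r`, the determinant of `J` is
`γ² α² r² / (4 σ²) * (2 (β² + α²) - (β + α)²) = γ² α² r² (β - α)² / (4 σ²) = 9 γ² α² / (4 σ²) > 0`.
Everything else holds for any symmetric `2 × 2` matrix with entries `a, b, b, d` such that `0 < a`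
and `0 < a d - b²`: the quadratic form is positive after completing the square, and
`a (J⁻¹)₁₁ = d (J⁻¹)₂₂ = a d / (a d - b²) = 1 / (1 - ρ²)` because `ρ² = b² / (a d)`.
-/

open Matrix Real

/-- The MI-ISAC Fisher information matrix for joint range–conductivity estimation. -/
noncomputable def miFIM (f₀ μ₀ r σ γ : ℝ) : Matrix (Fin 2) (Fin 2) ℝ :=
  !![γ * (miBeta f₀ μ₀ r σ ^ 2 + miAlpha f₀ μ₀ σ ^ 2),
     γ * miAlpha f₀ μ₀ σ * r * (miBeta f₀ μ₀ r σ + miAlpha f₀ μ₀ σ) / (2 * σ);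
     γ * miAlpha f₀ μ₀ σ * r * (miBeta f₀ μ₀ r σ + miAlpha f₀ μ₀ σ) / (2 * σ),
     γ * miAlpha f₀ μ₀ σ ^ 2 * r ^ 2 / (2 * σ ^ 2)]

/-- The sufficient direction of Sylvester's criterion for real symmetric `2 × 2` matrices. -/
lemma posDef_fin_two_of_pos {a b d : ℝ} (ha : 0 < a) (hdet : 0 < a * d - b ^ 2) :
    (!![a, b; b, d] : Matrix (Fin 2) (Fin 2) ℝ).PosDef := by
  refine Matrix.PosDef.of_dotProduct_mulVec_pos ?_ ?_
  · ext i j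
    fin_cases i <;> fin_cases j <;> simp
  · intro x hx
    have hne : x 0 ≠ 0 ∨ x 1 ≠ 0 := by
      by_contra! h
      exact hx (by ext i; fin_cases i <;> simp [h.1, h.2])
    have hform : star x ⬝ᵥ (!![a, b; b, d] *ᵥ x)
        = ((a * x 0 + b * x 1) ^ 2 + (a * d - b ^ 2) * x 1 ^ 2) / a := by
      simp [Matrix.mulVec, dotProduct, Fin.sum_univ_two]
      field_simp
      ring
    rw [hform]
    refine div_pos ?_ ha
    by_cases h1 : x 1 = 0
    · have h0 : x 0 ≠ 0 := hne.resolve_right (not_not.mpr h1)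
      rw [h1]
      have : 0 < (a * x 0) ^ 2 := by positivity
      simpa using this
    · have : 0 < (a * d - b ^ 2) * x 1 ^ 2 := by positivity
      positivity

lemma det_miFIM_pos {f₀ μ₀ r σ γ : ℝ} (hf₀ : 0 < f₀) (hμ₀ : 0 < μ₀)
    (hr : 0 < r) (hσ : 0 < σ) (hγ : 0 < γ) :
    0 < γ * (miBeta f₀ μ₀ r σ ^ 2 + miAlpha f₀ μ₀ σ ^ 2) *
        (γ * miAlpha f₀ μ₀ σ ^ 2 * r ^ 2 / (2 * σ ^ 2)) -
      (γ * miAlpha f₀ μ₀ σ * r * (miBeta f₀ μ₀ r σ + miAlpha f₀ μ₀ σ) / (2 * σ)) ^ 2 := by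
  have hα : 0 < miAlpha f₀ μ₀ σ := Real.sqrt_pos.mpr (by positivity)
  have h : γ * (miBeta f₀ μ₀ r σ ^ 2 + miAlpha f₀ μ₀ σ ^ 2) *
        (γ * miAlpha f₀ μ₀ σ ^ 2 * r ^ 2 / (2 * σ ^ 2)) -
      (γ * miAlpha f₀ μ₀ σ * r * (miBeta f₀ μ₀ r σ + miAlpha f₀ μ₀ σ) / (2 * σ)) ^ 2
      = 9 * γ ^ 2 * miAlpha f₀ μ₀ σ ^ 2 / (4 * σ ^ 2) := by
    unfold miBeta
    field_simp
    ring
  rw [h]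
  positivity

/-- (Theorem 1, second part) The MI-ISAC FIM is positive definite and the joint
estimation penalties satisfy `Δ_r = Δ_σ = 1/(1 − ρ²) ≥ 1` with `ρ = J₁₂/√(J₁₁·J₂₂)`. -/
theorem stmt_8 (f₀ μ₀ : ℝ) (hf₀ : 0 < f₀) (hμ₀ : 0 < μ₀)
    (r σ γ : ℝ) (hr : 0 < r) (hσ : 0 < σ) (hγ : 0 < γ)
    (J : Matrix (Fin 2) (Fin 2) ℝ) (hJ : J = miFIM f₀ μ₀ r σ γ)
    (ρ : ℝ) (hρ : ρ = J 0 1 / Real.sqrt (J 0 0 * J 1 1)) :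
    J.PosDef ∧
    J 0 0 * (J⁻¹ 0 0) = 1 / (1 - ρ ^ 2) ∧
    J 1 1 * (J⁻¹ 1 1) = 1 / (1 - ρ ^ 2) ∧
    1 ≤ 1 / (1 - ρ ^ 2) := by
  have hα : 0 < miAlpha f₀ μ₀ σ := Real.sqrt_pos.mpr (by positivity)
  have hdet := det_miFIM_pos hf₀ hμ₀ hr hσ hγ
  have ha : 0 < γ * (miBeta f₀ μ₀ r σ ^ 2 + miAlpha f₀ μ₀ σ ^ 2) := by positivity
  have hd : 0 < γ * miAlpha f₀ μ₀ σ ^ 2 * r ^ 2 / (2 * σ ^ 2) := by positivity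
  unfold miFIM at hJ
  generalize γ * (miBeta f₀ μ₀ r σ ^ 2 + miAlpha f₀ μ₀ σ ^ 2) = a at *
  generalize γ * miAlpha f₀ μ₀ σ ^ 2 * r ^ 2 / (2 * σ ^ 2) = d at *
  generalize
    γ * miAlpha f₀ μ₀ σ * r * (miBeta f₀ μ₀ r σ + miAlpha f₀ μ₀ σ) / (2 * σ) = b at *
  subst hJ
  have had : 0 < a * d := mul_pos ha hd
  have hρ2 : 1 - ρ ^ 2 = (a * d - b ^ 2) / (a * d) := by
    rw [hρ, div_pow]
    simp only [Matrix.of_apply, Matrix.cons_val', Matrix.cons_val_zero, Matrix.cons_val_one,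
      Matrix.cons_val_fin_one]
    rw [Real.sq_sqrt had.le]
    field_simp
  have hinv : (!![a, b; b, d] : Matrix (Fin 2) (Fin 2) ℝ)⁻¹
      = (a * d - b ^ 2)⁻¹ • !![d, -b; -b, a] := by
    rw [Matrix.inv_def, Matrix.adjugate_fin_two_of, Matrix.det_fin_two_of, Ring.inverse_eq_inv',
      sq]
  refine ⟨posDef_fin_two_of_pos ha hdet, ?_, ?_, ?_⟩
  · rw [hρ2, hinv, one_div_div]
    simp
    field_simp
  · rw [hρ2, hinv, one_div_div]
    simp
    field_simp
  · rw [hρ2, one_div_div, one_le_div hdet]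
    nlinarith [sq_nonneg b]
end

section
/- For all r, σ > 0 and γ > 0, the joint Cramér–Rao bound on range for the MI-ISAC problem admits the closed form (J⁻¹)₁₁ = 2·r²/(9·γ). -/
open Matrix Real

/-- The joint Cramér–Rao bound on range admits the closed form `(J⁻¹)₁₁ = 2r²/(9γ)`. -/
theorem stmt_10 (f₀ μ₀ : ℝ) (hf₀ : 0 < f₀) (hμ₀ : 0 < μ₀)
    (r σ γ : ℝ) (hr : 0 < r) (hσ : 0 < σ) (hγ : 0 < γ) :
    (miFIM f₀ μ₀ r σ γ)⁻¹ 0 0 = 2 * r ^ 2 / (9 * γ) := by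
  have hα : 0 < miAlpha f₀ μ₀ σ := Real.sqrt_pos.mpr (by positivity)
  -- `2 (β² + α²) - (β + α)² = (β - α)² = 9 / r²`, so `α` survives in the determinant only
  -- through the factor `α² / σ²`, which cancels against the one in `J₂₂`.
  have hdet : (miFIM f₀ μ₀ r σ γ).det = 9 * γ ^ 2 * miAlpha f₀ μ₀ σ ^ 2 / (4 * σ ^ 2) := by
    simp only [miFIM, miBeta, Matrix.det_fin_two_of]
    field_simp
    ring
  rw [Matrix.inv_def, Matrix.smul_apply, Matrix.adjugate_fin_two, hdet, Ring.inverse_eq_inv']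
  simp only [miFIM, Matrix.of_apply, Matrix.cons_val', Matrix.cons_val_zero, Matrix.cons_val_one,
    Matrix.cons_val_fin_one, smul_eq_mul]
  field_simp
  norm_num
end

section
/- For all r, σ > 0 and γ > 0, the joint Cramér–Rao bound on conductivity for the MI-ISAC problem admits the closed form (J⁻¹)₂₂ = 4·σ²·(β(r,σ)² + α(σ)²)/(9·γ·α(σ)²). -/
open Matrix Real

/-- The joint Cramér–Rao bound on conductivity admits the closed form
`(J⁻¹)₂₂ = 4σ²(β² + α²)/(9γα²)`. -/
theorem stmt_11 (f₀ μ₀ : ℝ) (hf₀ : 0 < f₀) (hμ₀ : 0 < μ₀)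
    (r σ γ : ℝ) (hr : 0 < r) (hσ : 0 < σ) (hγ : 0 < γ) :
    (miFIM f₀ μ₀ r σ γ)⁻¹ 1 1 =
      4 * σ ^ 2 * (miBeta f₀ μ₀ r σ ^ 2 + miAlpha f₀ μ₀ σ ^ 2) /
        (9 * γ * miAlpha f₀ μ₀ σ ^ 2) := by
  have hα : 0 < miAlpha f₀ μ₀ σ := Real.sqrt_pos.mpr (by positivity)
  -- `det J = γ² α² r² (β - α)² / (4σ²)`, and `r (β - α) = 3`.
  have hdet : (miFIM f₀ μ₀ r σ γ).det = 9 * γ ^ 2 * miAlpha f₀ μ₀ σ ^ 2 / (4 * σ ^ 2) := by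
    simp only [miFIM, Matrix.det_fin_two_of, miBeta]
    field_simp
    ring
  -- The lower-right entry of the adjugate of `J` is `J₁₁`.
  rw [Matrix.inv_def, hdet, Ring.inverse_eq_inv', Matrix.smul_apply, Matrix.adjugate_fin_two]
  simp only [miFIM, Matrix.of_apply, Matrix.cons_val', Matrix.cons_val_zero, Matrix.cons_val_one,
    Matrix.cons_val_fin_one, smul_eq_mul]
  field_simp
end

section
/- For all x ≥ 0, the joint estimation penalty admits the closed form Δ(x) = 1/(1 − ρ(x)²) = 2·((3 + x)² + x²)/9 = (4x² + 12x + 18)/9; moreover Δ is strictly increasing on [0,∞) and satisfies Δ(x) ≥ 2 for all x ≥ 0, with equality exactly at x = 0 (i.e., the joint estimation penalty is always at least 3 dB and is minimized in the near-field limit). -/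
open Real Filter Set

/-- Fisher correlation coefficient as a function of the electrical distance `x = α·r`. -/
noncomputable def miRho (x : ℝ) : ℝ :=
  (3 + 2 * x) / Real.sqrt (2 * ((3 + x) ^ 2 + x ^ 2))

/-- Joint estimation penalty `Δ(x) = 1/(1 − ρ(x)²)`. -/
noncomputable def miPenalty (x : ℝ) : ℝ := 1 / (1 - miRho x ^ 2)

/-- With `S = 2((3 + x)² + x²)`, the numerator `S - (3 + 2x)²` of `1 - ρ(x)²` is the
constant `9`, so the penalty is the polynomial `S / 9`. -/
lemma miPenalty_eq (x : ℝ) : miPenalty x = (4 * x ^ 2 + 12 * x + 18) / 9 := by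
  have hS : 0 < 2 * ((3 + x) ^ 2 + x ^ 2) := by nlinarith [sq_nonneg (2 * x + 3)]
  have h : 1 - miRho x ^ 2 = 9 / (2 * ((3 + x) ^ 2 + x ^ 2)) := by
    rw [miRho, div_pow, Real.sq_sqrt hS.le, eq_div_iff hS.ne', sub_mul,
      div_mul_cancel₀ _ hS.ne']
    ring
  rw [miPenalty, h, one_div_div]
  ring

/-- Closed form of the joint estimation penalty, its strict monotonicity on `[0,∞)`,
the `3 dB` lower bound `Δ(x) ≥ 2`, and equality exactly at `x = 0`. -/
theorem stmt_15 :
    (∀ x : ℝ, 0 ≤ x →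
      miPenalty x = 2 * ((3 + x) ^ 2 + x ^ 2) / 9 ∧
      miPenalty x = (4 * x ^ 2 + 12 * x + 18) / 9) ∧
    StrictMonoOn miPenalty (Set.Ici 0) ∧
    (∀ x : ℝ, 0 ≤ x → 2 ≤ miPenalty x) ∧
    (∀ x : ℝ, 0 ≤ x → (miPenalty x = 2 ↔ x = 0)) := by
  refine ⟨fun x _ => ⟨?_, miPenalty_eq x⟩, ?_, ?_, ?_⟩
  · rw [miPenalty_eq]
    ring
  · intro x hx y _ hxy
    have hx0 : 0 ≤ x := hx
    rw [miPenalty_eq, miPenalty_eq]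
    nlinarith
  · intro x hx
    rw [miPenalty_eq]
    nlinarith
  · intro x hx
    rw [miPenalty_eq]
    constructor
    · intro h
      nlinarith
    · rintro rfl
      norm_num
end

section
/- The MI channel map h is injective on the phase-unwrapped region: if r₁, σ₁, r₂, σ₂ > 0 satisfy α(σ₁)·r₁ < 2π and α(σ₂)·r₂ < 2π and h(r₁,σ₁) = h(r₂,σ₂), then r₁ = r₂ and σ₁ = σ₂. -/
/-!
Absorbing the factor `1 / r ^ 3` into the exponential gives
`h(r, σ) = C * exp ((-3 log r - t) - i t)` with `t = α(σ) r`, so equal gains have exponents that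
differ by an integer multiple of `2πi`. The imaginary parts `-t₁`, `-t₂` lie in `(-2π, 0)`, hence
that integer is zero and `t₁ = t₂`. The real parts then give `log r₁ = log r₂`, so `r₁ = r₂`,
`α(σ₁) = α(σ₂)`, and finally `σ₁ = σ₂`.
-/

open Complex Real

/-- MI channel gain `h(r,σ) = (C/r³)·exp(−(1+i)·α(σ)·r)`. -/
noncomputable def miH (f₀ μ₀ : ℝ) (C : ℂ) (r σ : ℝ) : ℂ :=
  (C / (r : ℂ) ^ 3) * Complex.exp (-(1 + Complex.I) * (miAlpha f₀ μ₀ σ : ℂ) * (r : ℂ))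

theorem miH_eq_mul_exp (f₀ μ₀ : ℝ) (C : ℂ) (r σ : ℝ) (hr : 0 < r) :
    miH f₀ μ₀ C r σ = C * Complex.exp
      (((-3 * Real.log r - miAlpha f₀ μ₀ σ * r : ℝ) : ℂ)
        + ((-(miAlpha f₀ μ₀ σ * r) : ℝ) : ℂ) * Complex.I) := by
  have hpow : Complex.exp ((3 : ℕ) * ((Real.log r : ℝ) : ℂ)) = (r : ℂ) ^ 3 := by
    rw [Complex.exp_nat_mul, ← Complex.ofReal_exp, Real.exp_log hr]
  unfold miH
  rw [div_mul_eq_mul_div, mul_div_assoc, ← hpow, ← Complex.exp_sub]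
  congr 2
  push_cast
  ring

/-- The MI channel map is injective on the phase-unwrapped region `α(σ)·r < 2π`. -/
theorem stmt_16 (f₀ μ₀ : ℝ) (hf₀ : 0 < f₀) (hμ₀ : 0 < μ₀) (C : ℂ) (hC : C ≠ 0)
    (r₁ σ₁ r₂ σ₂ : ℝ) (hr₁ : 0 < r₁) (hσ₁ : 0 < σ₁) (hr₂ : 0 < r₂) (hσ₂ : 0 < σ₂)
    (hph₁ : miAlpha f₀ μ₀ σ₁ * r₁ < 2 * Real.pi)
    (hph₂ : miAlpha f₀ μ₀ σ₂ * r₂ < 2 * Real.pi)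
    (heq : miH f₀ μ₀ C r₁ σ₁ = miH f₀ μ₀ C r₂ σ₂) :
    r₁ = r₂ ∧ σ₁ = σ₂ := by
  have hα₁ : 0 < miAlpha f₀ μ₀ σ₁ := by unfold miAlpha; positivity
  have hα₂ : 0 < miAlpha f₀ μ₀ σ₂ := by unfold miAlpha; positivity
  have ht₁ := mul_pos hα₁ hr₁
  have ht₂ := mul_pos hα₂ hr₂
  rw [miH_eq_mul_exp _ _ _ _ _ hr₁, miH_eq_mul_exp _ _ _ _ _ hr₂] at heq
  obtain ⟨n, hn⟩ := Complex.exp_eq_exp_iff_exists_int.1 (mul_left_cancel₀ hC heq)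
  have hre := congrArg Complex.re hn
  have him := congrArg Complex.im hn
  simp [-Complex.ofReal_mul, -Complex.ofReal_sub, -Complex.ofReal_neg] at hre him
  have hπ := Real.pi_pos
  -- `|n| * 2π = |t₂ - t₁| < 2π` forces `n = 0`.
  have hn0 : n = 0 := by
    have h1 : (n : ℝ) < 1 := by
      by_contra! h
      nlinarith
    have h2 : (-1 : ℝ) < n := by
      by_contra! h
      nlinarith
    have h1' : n < 1 := by exact_mod_cast h1
    have h2' : -1 < n := by exact_mod_cast h2
    omega
  have ht : miAlpha f₀ μ₀ σ₁ * r₁ = miAlpha f₀ μ₀ σ₂ * r₂ := by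
    rw [hn0] at him
    push_cast at him
    linarith
  have hr : r₁ = r₂ := Real.log_injOn_pos hr₁ hr₂ (by linarith)
  refine ⟨hr, ?_⟩
  rw [hr] at ht
  have hα := mul_right_cancel₀ hr₂.ne' ht
  unfold miAlpha at hα
  rw [Real.sqrt_inj (by positivity) (by positivity)] at hα
  exact mul_left_cancel₀ (by positivity) hα
end
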